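/- Let R be a ring and let 𝒳 be a class of right R-modules closed under isomorphisms and direct summands such that every right R-module has a monomorphic 𝒳-envelope. Let M and N be 𝒳-endomorphism invariant right R-modules with monomorphic 𝒳-envelopes v_M : M → X(M) and v_N : N → X(N). Assume that N is 𝒳-strongly purely closed and that M is an 𝒳-strongly pure submodule of N. If there exists an 𝒳-strongly pure monomorphism u : N → M, then M ≅ N. -/

import Mathlib

/-!
Schröder-Bernstein problem for modules (Guil Asensio, Kaleboğaz, Srivastava).
We formalize "right R-modules" as Lean `Module R` modules (the theory is side-symmetric).
A class of modules is a predicate on modules (in a fixed universe `u`).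
-/

universe u

variable (R : Type u) [Ring R]

/-- The class `𝒳` of modules, as a predicate on `R`-modules. -/
abbrev ModClass := ∀ (X : Type u) [AddCommGroup X] [Module R X], Prop

/-- `X` is a direct summand of `Y`. -/
def IsDirectSummandOf (X Y : Type u) [AddCommGroup X] [Module R X]
    [AddCommGroup Y] [Module R Y] : Prop :=
  ∃ (i : X →ₗ[R] Y) (p : Y →ₗ[R] X), p ∘ₗ i = LinearMap.id

/-- `𝒳` is closed under isomorphisms. -/
def ClosedUnderIsos (𝒳 : ModClass R) : Prop :=
  ∀ (X Y : Type u) [AddCommGroup X] [Module R X] [AddCommGroup Y] [Module R Y],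
    Nonempty (X ≃ₗ[R] Y) → 𝒳 X → 𝒳 Y

/-- `𝒳` is closed under direct summands. -/
def ClosedUnderSummands (𝒳 : ModClass R) : Prop :=
  ∀ (X Y : Type u) [AddCommGroup X] [Module R X] [AddCommGroup Y] [Module R Y],
    IsDirectSummandOf R X Y → 𝒳 Y → 𝒳 X

/-- `u : M → X` is an `𝒳`-preenvelope of `M`: `X ∈ 𝒳` and every homomorphism from `M`
to a member of `𝒳` factors through `u`. -/
def IsPreenvelope (𝒳 : ModClass R) {M X : Type u} [AddCommGroup M] [Module R M]
    [AddCommGroup X] [Module R X] (u : M →ₗ[R] X) : Prop :=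
  𝒳 X ∧ ∀ (X' : Type u) [AddCommGroup X'] [Module R X'], 𝒳 X' →
    ∀ g : M →ₗ[R] X', ∃ h : X →ₗ[R] X', h ∘ₗ u = g

/-- `u : M → X` is an `𝒳`-envelope: a preenvelope such that any endomorphism `h` of `X`
with `h ∘ u = u` is an automorphism. -/
def IsEnvelope (𝒳 : ModClass R) {M X : Type u} [AddCommGroup M] [Module R M]
    [AddCommGroup X] [Module R X] (u : M →ₗ[R] X) : Prop :=
  IsPreenvelope R 𝒳 u ∧ ∀ h : X →ₗ[R] X, h ∘ₗ u = u → Function.Bijective h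

/-- Every `R`-module has a monomorphic `𝒳`-envelope. -/
def HasMonoEnvelopes (𝒳 : ModClass R) : Prop :=
  ∀ (M : Type u) [AddCommGroup M] [Module R M],
    ∃ (X : Type u) (_ : AddCommGroup X) (_ : Module R X) (u : M →ₗ[R] X),
      Function.Injective u ∧ IsEnvelope R 𝒳 u

/-- `u : N → M` is an `𝒳`-strongly pure monomorphism: every homomorphism `f : N → X`
with `X ∈ 𝒳` extends to `g : M → X` with `g ∘ u = f`. -/
def IsStronglyPureMono (𝒳 : ModClass R) {N M : Type u} [AddCommGroup N] [Module R N]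
    [AddCommGroup M] [Module R M] (u : N →ₗ[R] M) : Prop :=
  ∀ (X : Type u) [AddCommGroup X] [Module R X], 𝒳 X →
    ∀ f : N →ₗ[R] X, ∃ g : M →ₗ[R] X, g ∘ₗ u = f

/-- `A ∈ add[M]`: `A` is a direct summand of a finite direct sum of copies of `M`. -/
def InAdd (M : Type u) [AddCommGroup M] [Module R M]
    (A : Type u) [AddCommGroup A] [Module R A] : Prop :=
  ∃ n : ℕ, IsDirectSummandOf R A (Fin n → M)

/-- `M` is `𝒳`-strongly purely closed: any direct limit of splitting monomorphisms among
objects of `add[M]` is an `𝒳`-strongly pure monomorphism. -/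
def IsStronglyPurelyClosed (𝒳 : ModClass R) (M : Type u) [AddCommGroup M] [Module R M] :
    Prop :=
  ∀ (ι : Type u) [Preorder ι] [IsDirected ι (· ≤ ·)] [Nonempty ι] [DecidableEq ι]
    (A B : ι → Type u) [∀ i, AddCommGroup (A i)] [∀ i, Module R (A i)]
    [∀ i, AddCommGroup (B i)] [∀ i, Module R (B i)]
    (fA : ∀ i j, i ≤ j → A i →ₗ[R] A j) (fB : ∀ i j, i ≤ j → B i →ₗ[R] B j)
    [DirectedSystem A fun i j h => fA i j h] [DirectedSystem B fun i j h => fB i j h],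
    (∀ i, InAdd R M (A i)) → (∀ i, InAdd R M (B i)) →
    ∀ (g : ∀ i, A i →ₗ[R] B i) (hg : ∀ i j h, g j ∘ₗ fA i j h = fB i j h ∘ₗ g i),
      (∀ i, ∃ p : B i →ₗ[R] A i, p ∘ₗ g i = LinearMap.id) →
      IsStronglyPureMono R 𝒳 (Module.DirectLimit.map g hg)

/-- `M` is `𝒳`-endomorphism invariant: for every monomorphic `𝒳`-envelope `u : M → X`
and every endomorphism `φ` of `X`, there is an endomorphism `f` of `M` with
`u ∘ f = φ ∘ u`. -/
def IsEndoInvariant (𝒳 : ModClass R) (M : Type u) [AddCommGroup M] [Module R M] : Prop :=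
  ∀ (X : Type u) [AddCommGroup X] [Module R X] (u : M →ₗ[R] X),
    Function.Injective u → IsEnvelope R 𝒳 u →
    ∀ φ : X →ₗ[R] X, ∃ f : M →ₗ[R] M, u ∘ₗ f = φ ∘ₗ u

/-!
Write `X(A)` for the envelope of `A`. A strongly pure monomorphism `A → B` makes `X(A)` a direct
summand of `X(B)`, and if `B` is endomorphism invariant, then every map `A → X(B)` lifts to a map
`A → B`. Hence `M ≅ N` as soon as `X(M) ≅ X(N)`.

The lifting property also makes `M` and `N` direct summands of one another, say `N ≅ M ⊕ H`. Then
the composite `w : N → M → N` is an injection with `N = H ⊕ w(N) ⊕ C`, so the summands `wᵏ(H)` of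
`N` are independent and the finite sums of them are direct summands of `N`. As `N` is strongly
purely closed, the directed union `P ≅ H^(ℕ)` of these finite sums is strongly pure in `N`, hence in
`M`. So `X(P)` is a direct summand of `X(M)`, and `P ≅ P ⊕ H` gives `X(P) ≅ X(P) ⊕ X(H)`. By the
Eilenberg swindle `X(M) ≅ X(M) ⊕ X(H) ≅ X(N)`.
-/

section LinearAlgebra

variable {R}
variable {X Y X' Y' H ι : Type*} [AddCommGroup X] [Module R X] [AddCommGroup Y] [Module R Y]
  [AddCommGroup X'] [Module R X'] [AddCommGroup Y'] [Module R Y'] [AddCommGroup H] [Module R H]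

theorem bijective_of_schurComplement (T : X × Y →ₗ[R] X' × Y') (e : X ≃ₗ[R] X')
    (s : Y ≃ₗ[R] Y') (he : ∀ x, (T (x, 0)).1 = e x)
    (hs : ∀ y, (T (0, y)).2 - (T (e.symm (T (0, y)).1, 0)).2 = s y) :
    Function.Bijective T := by
  let t₁₂ : Y →ₗ[R] X' := LinearMap.fst R X' Y' ∘ₗ T ∘ₗ LinearMap.inr R X Y
  let t₂₁ : X →ₗ[R] Y' := LinearMap.snd R X' Y' ∘ₗ T ∘ₗ LinearMap.inl R X Y
  let upper : (X × Y) ≃ₗ[R] X × Y := LinearEquiv.prodComm R X Y ≪≫ₗ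
    (LinearEquiv.refl R Y).skewProd (LinearEquiv.refl R X) (e.symm ∘ₗ t₁₂) ≪≫ₗ
    LinearEquiv.prodComm R Y X
  have hT : upper ≪≫ₗ e.skewProd s t₂₁ = T := by
    ext x
    · simp [upper, t₁₂, he]
    · simp [upper, t₂₁]
    · simp [upper, t₁₂]
    · simp [upper, t₁₂, t₂₁, ← hs]
  rw [← hT]
  exact LinearEquiv.bijective _

theorem nonempty_linearEquiv_finsupp_prod [Infinite ι] :
    Nonempty ((ι →₀ H) ≃ₗ[R] (ι →₀ H) × H) := by
  obtain ⟨σ⟩ : Nonempty (ι ≃ Option ι) :=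
    Cardinal.eq.1 (Cardinal.mk_option.trans Cardinal.mk_add_one_eq).symm
  exact ⟨Finsupp.domLCongr (σ.trans (Equiv.optionEquivSumPUnit.{0} ι)) ≪≫ₗ
    Finsupp.sumFinsuppLEquivProdFinsupp R ≪≫ₗ
    (LinearEquiv.refl R _).prodCongr (Finsupp.uniqueLinearEquiv R H PUnit.unit)⟩

end LinearAlgebra

section DirectSummand

variable {R}
variable {A B H : Type u} [AddCommGroup A] [Module R A] [AddCommGroup B] [Module R B]
  [AddCommGroup H] [Module R H]

theorem IsDirectSummandOf.exists_linearEquiv_prod (h : IsDirectSummandOf R A B) :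
    ∃ (C : Type u) (_ : AddCommGroup C) (_ : Module R C), Nonempty (B ≃ₗ[R] A × C) := by
  obtain ⟨i, p, hpi⟩ := h
  exact ⟨B ⧸ LinearMap.range i, inferInstance, inferInstance,
    ⟨(i.exact_map_mkQ_range.splitInjectiveEquiv (Submodule.mkQ_surjective _) ⟨p, hpi⟩).1⟩⟩

theorem IsDirectSummandOf.nonempty_linearEquiv_prod (h : IsDirectSummandOf R A B)
    (hA : Nonempty (A ≃ₗ[R] A × H)) : Nonempty (B ≃ₗ[R] B × H) := by
  obtain ⟨C, _, _, ⟨e⟩⟩ := h.exists_linearEquiv_prod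
  obtain ⟨a⟩ := hA
  exact ⟨e ≪≫ₗ a.prodCongr (.refl R C) ≪≫ₗ LinearEquiv.prodAssoc R A H C ≪≫ₗ
    (LinearEquiv.refl R A).prodCongr (LinearEquiv.prodComm R H C) ≪≫ₗ
    (LinearEquiv.prodAssoc R A C H).symm ≪≫ₗ e.symm.prodCongr (.refl R H)⟩

theorem InAdd.of_linearEquiv_pi {κ : Type*} [Finite κ] (hH : IsDirectSummandOf R H B)
    (e : A ≃ₗ[R] (κ → H)) : InAdd R B A := by
  obtain ⟨i, p, hpi⟩ := hH
  let σ := LinearEquiv.funCongrLeft R B (Finite.equivFin κ)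
  refine ⟨Nat.card κ, σ.symm ∘ₗ i.compLeft κ ∘ₗ e, e.symm ∘ₗ p.compLeft κ ∘ₗ σ, ?_⟩
  ext x
  have hpi_apply : ∀ y, p (i y) = y := LinearMap.congr_fun hpi
  have hcancel : p.compLeft κ (i.compLeft κ (e x)) = e x := funext fun k => hpi_apply _
  simp [hcancel]

end DirectSummand

section LeftMinimal

variable {R}
variable {A B X Y : Type*} [AddCommGroup A] [Module R A] [AddCommGroup B] [Module R B]
  [AddCommGroup X] [Module R X] [AddCommGroup Y] [Module R Y] {a : A →ₗ[R] X} {b : B →ₗ[R] Y}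

/-- A left minimal homomorphism: every endomorphism of its codomain fixing it is an automorphism.
An envelope is a left minimal preenvelope. -/
def IsLeftMinimal (a : A →ₗ[R] X) : Prop :=
  ∀ h : X →ₗ[R] X, h ∘ₗ a = a → Function.Bijective h

theorem IsLeftMinimal.comp_linearEquiv (ha : IsLeftMinimal a) (e : B ≃ₗ[R] A) :
    IsLeftMinimal (a ∘ₗ e.toLinearMap) := fun h hh =>
  ha h <| LinearMap.ext <| e.surjective.forall.2 <| LinearMap.congr_fun hh

theorem IsLeftMinimal.prodMap (ha : IsLeftMinimal a) (hb : IsLeftMinimal b) :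
    IsLeftMinimal (a.prodMap b) := by
  intro T hT
  have hT_left (x : A) : T (a x, 0) = (a x, 0) := by simpa using LinearMap.congr_fun hT (x, 0)
  have hT_right (y : B) : T (0, b y) = (0, b y) := by simpa using LinearMap.congr_fun hT (0, y)
  let e := LinearEquiv.ofBijective (LinearMap.fst R X Y ∘ₗ T ∘ₗ LinearMap.inl R X Y)
    (ha _ <| by ext; simp [hT_left])
  let s := LinearEquiv.ofBijective
    (LinearMap.snd R X Y ∘ₗ T ∘ₗ LinearMap.inr R X Y - LinearMap.snd R X Y ∘ₗ T ∘ₗ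
      LinearMap.inl R X Y ∘ₗ e.symm ∘ₗ LinearMap.fst R X Y ∘ₗ T ∘ₗ LinearMap.inr R X Y)
    (hb _ <| by ext; simp [hT_right, Prod.mk_zero_zero])
  exact bijective_of_schurComplement T e s (fun _ => rfl) fun _ => rfl

theorem IsLeftMinimal.nonempty_linearEquiv {b : A →ₗ[R] Y} (ha : IsLeftMinimal a)
    (hb : IsLeftMinimal b) {h : X →ₗ[R] Y} {k : Y →ₗ[R] X} (hh : h ∘ₗ a = b) (hk : k ∘ₗ b = a) :
    Nonempty (X ≃ₗ[R] Y) := by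
  have hkh : Function.Bijective (k ∘ h) := ha (k ∘ₗ h) (by rw [LinearMap.comp_assoc, hh, hk])
  have hhk : Function.Bijective (h ∘ k) := hb (h ∘ₗ k) (by rw [LinearMap.comp_assoc, hk, hh])
  exact ⟨.ofBijective h ⟨hkh.injective.of_comp, hhk.surjective.of_comp⟩⟩

end LeftMinimal

section Envelope

variable {R}
variable {𝒳 : ModClass R} {A B C X Y Z : Type u} [AddCommGroup A] [Module R A]
  [AddCommGroup B] [Module R B] [AddCommGroup C] [Module R C] [AddCommGroup X] [Module R X]
  [AddCommGroup Y] [Module R Y] [AddCommGroup Z] [Module R Z]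
  {a : A →ₗ[R] X} {b : B →ₗ[R] Y} {c : C →ₗ[R] Z} {u : A →ₗ[R] B} {v : B →ₗ[R] A}

theorem IsStronglyPureMono.comp {g : B →ₗ[R] C} {f : A →ₗ[R] B} (hg : IsStronglyPureMono R 𝒳 g)
    (hf : IsStronglyPureMono R 𝒳 f) : IsStronglyPureMono R 𝒳 (g ∘ₗ f) := by
  intro X _ _ hX φ
  obtain ⟨ψ, rfl⟩ := hf X hX φ
  obtain ⟨χ, rfl⟩ := hg X hX ψ
  exact ⟨χ, rfl⟩

theorem IsEnvelope.isLeftMinimal (ha : IsEnvelope R 𝒳 a) : IsLeftMinimal a := ha.2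

-- `X × Y` need not belong to `𝒳`, so `a.prodMap b` is left minimal but possibly not an envelope.
theorem IsEnvelope.nonempty_linearEquiv_prod (hc : IsEnvelope R 𝒳 c) (ha : IsEnvelope R 𝒳 a)
    (hb : IsEnvelope R 𝒳 b) (e : C ≃ₗ[R] A × B) : Nonempty (Z ≃ₗ[R] X × Y) := by
  obtain ⟨h₁, hh₁⟩ := hc.1.2 X ha.1.1 (a ∘ₗ LinearMap.fst R A B ∘ₗ e)
  obtain ⟨h₂, hh₂⟩ := hc.1.2 Y hb.1.1 (b ∘ₗ LinearMap.snd R A B ∘ₗ e)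
  obtain ⟨k₁, hk₁⟩ := ha.1.2 Z hc.1.1 (c ∘ₗ e.symm ∘ₗ LinearMap.inl R A B)
  obtain ⟨k₂, hk₂⟩ := hb.1.2 Z hc.1.1 (c ∘ₗ e.symm ∘ₗ LinearMap.inr R A B)
  have hh : h₁.prod h₂ ∘ₗ c = a.prodMap b ∘ₗ e := by
    rw [LinearMap.prod_comp, hh₁, hh₂]
    rfl
  have hk : k₁.coprod k₂ ∘ₗ a.prodMap b = c ∘ₗ e.symm := by
    ext x
    · simpa using LinearMap.congr_fun hk₁ x
    · simpa using LinearMap.congr_fun hk₂ x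
  refine hc.isLeftMinimal.nonempty_linearEquiv
    ((ha.isLeftMinimal.prodMap hb.isLeftMinimal).comp_linearEquiv e) hh (k := k₁.coprod k₂) ?_
  rw [← LinearMap.comp_assoc, hk]
  ext
  simp

theorem IsEnvelope.isDirectSummandOf (ha : IsEnvelope R 𝒳 a) (hb : IsPreenvelope R 𝒳 b)
    (hu : IsStronglyPureMono R 𝒳 u) : IsDirectSummandOf R X Y := by
  obtain ⟨g, hg⟩ := hu X ha.1.1 a
  obtain ⟨h, hh⟩ := hb.2 X ha.1.1 g
  obtain ⟨k, hk⟩ := ha.1.2 Y hb.1 (b ∘ₗ u)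
  have hhk : Function.Bijective (h ∘ₗ k) :=
    ha.isLeftMinimal _ <| by rw [LinearMap.comp_assoc, hk, ← LinearMap.comp_assoc, hh, hg]
  let e := LinearEquiv.ofBijective (h ∘ₗ k) hhk
  exact ⟨k, e.symm ∘ₗ h, LinearMap.ext e.symm_apply_apply⟩

theorem IsEndoInvariant.exists_lift (hB : IsEndoInvariant R 𝒳 B) (hb : IsEnvelope R 𝒳 b)
    (hb_inj : Function.Injective b) (hu : IsStronglyPureMono R 𝒳 u) (g : A →ₗ[R] Y) :
    ∃ t : A →ₗ[R] B, b ∘ₗ t = g := by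
  obtain ⟨g', rfl⟩ := hu Y hb.1.1 g
  obtain ⟨φ, rfl⟩ := hb.1.2 Y hb.1.1 g'
  obtain ⟨f, hf⟩ := hB Y b hb_inj hb φ
  exact ⟨f ∘ₗ u, by rw [← LinearMap.comp_assoc, hf]⟩

theorem IsEndoInvariant.isDirectSummandOf (hA : IsEndoInvariant R 𝒳 A) (ha : IsEnvelope R 𝒳 a)
    (ha_inj : Function.Injective a) (hu : IsStronglyPureMono R 𝒳 u)
    (hv : IsStronglyPureMono R 𝒳 v) : IsDirectSummandOf R A B := by
  obtain ⟨g, hg⟩ := hu X ha.1.1 a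
  obtain ⟨p, hp⟩ := hA.exists_lift ha ha_inj hv g
  refine ⟨u, p, LinearMap.cancel_left ha_inj |>.1 ?_⟩
  rw [← LinearMap.comp_assoc, hp, hg, LinearMap.comp_id]

theorem IsEndoInvariant.nonempty_linearEquiv (hA : IsEndoInvariant R 𝒳 A)
    (hB : IsEndoInvariant R 𝒳 B) (ha : IsEnvelope R 𝒳 a) (ha_inj : Function.Injective a)
    (hb : IsEnvelope R 𝒳 b) (hb_inj : Function.Injective b) (hu : IsStronglyPureMono R 𝒳 u)
    (hv : IsStronglyPureMono R 𝒳 v) (φ : X ≃ₗ[R] Y) : Nonempty (A ≃ₗ[R] B) := by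
  obtain ⟨f, hf⟩ := hB.exists_lift hb hb_inj hu (φ ∘ₗ a)
  obtain ⟨g, hg⟩ := hA.exists_lift ha ha_inj hv (φ.symm ∘ₗ b)
  have hf_apply (x : A) : b (f x) = φ (a x) := LinearMap.congr_fun hf x
  have hg_apply (y : B) : a (g y) = φ.symm (b y) := LinearMap.congr_fun hg y
  exact ⟨.ofLinearMap f g (LinearMap.ext fun y => hb_inj <| by simp [hf_apply, hg_apply])
    (LinearMap.ext fun x => ha_inj <| by simp [hf_apply, hg_apply])⟩

end Envelope

section StronglyPurelyClosed

variable {R}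
variable {𝒳 : ModClass R} {H M N P ι : Type u} [AddCommGroup H] [Module R H]
  [AddCommGroup M] [Module R M] [AddCommGroup N] [Module R N] [AddCommGroup P] [Module R P]

theorem IsStronglyPurelyClosed.isStronglyPureMono_of_directed_submodule
    (hN : IsStronglyPurelyClosed R 𝒳 N) (j : P →ₗ[R] N) [Preorder ι] [IsDirectedOrder ι]
    [Nonempty ι] {S : ι → Submodule R P} (hS : Monotone S) (hS_mem : ∀ x, ∃ i, x ∈ S i)
    (hS_add : ∀ i, InAdd R N (S i))
    (hS_split : ∀ i, ∃ p : N →ₗ[R] S i, p ∘ₗ j ∘ₗ (S i).subtype = LinearMap.id) :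
    IsStronglyPureMono R 𝒳 j := by
  classical
  intro X _ _ hX f
  let fS (i k : ι) (h : i ≤ k) : S i →ₗ[R] S k := Submodule.inclusion (hS h)
  let fN (i k : ι) (_ : i ≤ k) : N →ₗ[R] N := LinearMap.id
  have : DirectedSystem (fun i => S i) fun i k h => fS i k h :=
    ⟨fun _ _ => rfl, fun _ _ _ _ _ _ => rfl⟩
  have : DirectedSystem (fun _ => N) fun i k h => fN i k h :=
    ⟨fun _ _ => rfl, fun _ _ _ _ _ _ => rfl⟩
  have hfS (i k : ι) (h : i ≤ k) :
      (j ∘ₗ (S k).subtype) ∘ₗ fS i k h = fN i k h ∘ₗ j ∘ₗ (S i).subtype := rfl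
  have hN_add : InAdd R N N :=
    ⟨1, LinearMap.pi fun _ => LinearMap.id, LinearMap.proj 0, rfl⟩
  let colim_f : Module.DirectLimit (fun i => S i) fS →ₗ[R] X :=
    Module.DirectLimit.lift R ι _ fS (fun i => f ∘ₗ (S i).subtype) fun _ _ _ _ => rfl
  obtain ⟨g, hg⟩ := hN ι (fun i => S i) (fun _ => N) fS fN hS_add (fun _ => hN_add)
    (fun i => j ∘ₗ (S i).subtype) hfS hS_split X hX colim_f
  let ofN (i : ι) : N →ₗ[R] Module.DirectLimit (fun _ : ι => N) fN :=
    Module.DirectLimit.of R ι (fun _ => N) fN i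
  have hofN (i k : ι) : ofN i = ofN k := by
    obtain ⟨l, hil, hkl⟩ := exists_ge_ge i k
    ext y
    exact (Module.DirectLimit.of_f (f := fN) (hij := hil)).symm.trans
      (Module.DirectLimit.of_f (f := fN) (hij := hkl))
  obtain ⟨i₀⟩ := ‹Nonempty ι›
  refine ⟨g ∘ₗ ofN i₀, LinearMap.ext fun x => ?_⟩
  obtain ⟨i, hx⟩ := hS_mem x
  rw [hofN i₀ i]
  have hgx := LinearMap.congr_fun hg (Module.DirectLimit.of R ι (fun i => S i) fS i ⟨x, hx⟩)
  rw [LinearMap.comp_apply, Module.DirectLimit.map_apply_of] at hgx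
  exact hgx.trans (Module.DirectLimit.lift_of _ _ _)

theorem IsStronglyPurelyClosed.isStronglyPureMono_lsum (hN : IsStronglyPurelyClosed R 𝒳 N)
    {s : ι → H →ₗ[R] N} {c : ι → N →ₗ[R] H} [Nonempty ι]
    (hcs : ∀ k, c k ∘ₗ s k = LinearMap.id) (hcs_ne : ∀ k l, k ≠ l → c k ∘ₗ s l = 0) :
    IsStronglyPureMono R 𝒳 (Finsupp.lsum ℕ s) := by
  classical
  have hc (k : ι) (x : ι →₀ H) : c k (Finsupp.lsum ℕ s x) = x k := by
    suffices c k ∘ₗ Finsupp.lsum ℕ s = Finsupp.lapply k from LinearMap.congr_fun this x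
    ext l y
    rcases eq_or_ne k l with rfl | hkl
    · simpa using LinearMap.congr_fun (hcs k) y
    · simpa [Finsupp.single_eq_of_ne hkl] using LinearMap.congr_fun (hcs_ne k l hkl) y
  let e (t : Finset ι) : Finsupp.supported H R (t : Set ι) ≃ₗ[R] (t → H) :=
    Finsupp.supportedEquivFinsupp _ ≪≫ₗ Finsupp.linearEquivFunOnFinite R H _
  have hH : IsDirectSummandOf R H N := ⟨s (Classical.arbitrary ι), c _, hcs _⟩
  refine hN.isStronglyPureMono_of_directed_submodule _
    (S := fun t : Finset ι => Finsupp.supported H R (t : Set ι))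
    (fun t₁ t₂ h => Finsupp.supported_mono (Finset.coe_subset.2 h))
    (fun x => ⟨x.support, (Finsupp.mem_supported R x).2 subset_rfl⟩)
    (fun t => .of_linearEquiv_pi hH (e t)) fun t =>
    ⟨(e t).symm ∘ₗ LinearMap.pi fun k : t => c k, LinearMap.ext fun x => ?_⟩
  exact (e t).symm_apply_eq.2 <| funext fun k => hc k x

-- `ℕ` is lifted to `Type u` because strong pure closedness only sees index sets there.
theorem IsStronglyPurelyClosed.isStronglyPureMono_lsum_pow (hN : IsStronglyPurelyClosed R 𝒳 N)
    {s : H →ₗ[R] N} {π : N →ₗ[R] H} {w r : Module.End R N} (hπs : π ∘ₗ s = LinearMap.id)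
    (hπw : π ∘ₗ w = 0) (hrs : r ∘ₗ s = 0) (hrw : r * w = 1) :
    IsStronglyPureMono R 𝒳 (Finsupp.lsum ℕ fun k : ULift.{u} ℕ => (w ^ k.down) ∘ₗ s) := by
  have hrw_apply (k : ℕ) (x : N) : (r ^ k) ((w ^ k) x) = x :=
    LinearMap.congr_fun (pow_mul_pow_eq_one k hrw) x
  refine hN.isStronglyPureMono_lsum (c := fun k => π ∘ₗ r ^ k.down) (fun k => ?_) fun k l hkl => ?_
  · ext x
    simpa [hrw_apply] using LinearMap.congr_fun hπs x
  · obtain ⟨k⟩ := k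
    obtain ⟨l⟩ := l
    ext x
    rcases lt_or_gt_of_ne (ULift.up_injective.ne_iff.1 hkl) with hlt | hlt
    · obtain ⟨d, rfl⟩ := Nat.exists_eq_add_of_lt hlt
      simpa [add_assoc, pow_add w k, pow_succ', hrw_apply] using
        LinearMap.congr_fun hπw ((w ^ d) (s x))
    · obtain ⟨d, rfl⟩ := Nat.exists_eq_add_of_lt hlt
      have hrs_apply : r (s x) = 0 := LinearMap.congr_fun hrs x
      simp [show l + d + 1 = d + 1 + l by ring, pow_add r _ l, pow_succ, hrw_apply, hrs_apply]

theorem IsStronglyPurelyClosed.exists_isStronglyPureMono_finsupp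
    (hN : IsStronglyPurelyClosed R 𝒳 N) (hNM : IsDirectSummandOf R N M) (e : N ≃ₗ[R] M × H) :
    ∃ j : (ULift.{u} ℕ →₀ H) →ₗ[R] N, IsStronglyPureMono R 𝒳 j := by
  obtain ⟨i, p, hpi⟩ := hNM
  have hpi_apply : ∀ x, p (i x) = x := LinearMap.congr_fun hpi
  refine ⟨_, hN.isStronglyPureMono_lsum_pow (s := e.symm ∘ₗ LinearMap.inr R M H)
    (π := LinearMap.snd R M H ∘ₗ e) (w := e.symm ∘ₗ LinearMap.inl R M H ∘ₗ i)
    (r := p ∘ₗ LinearMap.fst R M H ∘ₗ e) ?_ ?_ ?_ ?_⟩ <;> ext x <;> simp [hpi_apply]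

end StronglyPurelyClosed

theorem stmt9_general (𝒳 : ModClass R) (henv : HasMonoEnvelopes R 𝒳)
    {M N : Type u} [AddCommGroup M] [Module R M] [AddCommGroup N] [Module R N]
    (hM : IsEndoInvariant R 𝒳 M) (hN : IsEndoInvariant R 𝒳 N)
    (hN_closed : IsStronglyPurelyClosed R 𝒳 N) (i : M →ₗ[R] N) (hi : IsStronglyPureMono R 𝒳 i)
    (u : N →ₗ[R] M) (hu : IsStronglyPureMono R 𝒳 u) : Nonempty (M ≃ₗ[R] N) := by
  obtain ⟨XM, _, _, vM, vM_inj, vM_env⟩ := henv M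
  obtain ⟨XN, _, _, vN, vN_inj, vN_env⟩ := henv N
  have hMN : IsDirectSummandOf R M N := hM.isDirectSummandOf vM_env vM_inj hi hu
  have hNM : IsDirectSummandOf R N M := hN.isDirectSummandOf vN_env vN_inj hu hi
  obtain ⟨H, _, _, ⟨e⟩⟩ := hMN.exists_linearEquiv_prod
  obtain ⟨j, hj⟩ := hN_closed.exists_isStronglyPureMono_finsupp hNM e
  obtain ⟨XH, _, _, vH, -, vH_env⟩ := henv H
  obtain ⟨XP, _, _, vP, -, vP_env⟩ := henv (ULift.{u} ℕ →₀ H)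
  obtain ⟨σ⟩ := nonempty_linearEquiv_finsupp_prod (R := R) (H := H) (ι := ULift.{u} ℕ)
  have hXP : IsDirectSummandOf R XP XM := vP_env.isDirectSummandOf vM_env.1 (hu.comp hj)
  obtain ⟨swindle⟩ : Nonempty (XM ≃ₗ[R] XM × XH) :=
    hXP.nonempty_linearEquiv_prod (vP_env.nonempty_linearEquiv_prod vP_env vH_env σ)
  obtain ⟨d⟩ : Nonempty (XN ≃ₗ[R] XM × XH) := vN_env.nonempty_linearEquiv_prod vM_env vH_env e
  exact hM.nonempty_linearEquiv hN vM_env vM_inj vN_env vN_inj hi hu (swindle ≪≫ₗ d.symm)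

/-- **Theorem 2.7.** Let `M, N` be `𝒳`-endomorphism invariant modules, with `N`
`𝒳`-strongly purely closed and `M` an `𝒳`-strongly pure submodule of `N`. If there is an
`𝒳`-strongly pure monomorphism `u : N → M`, then `M ≅ N`. -/
theorem stmt9 (𝒳 : ModClass R) (hiso : ClosedUnderIsos R 𝒳)
    (hsum : ClosedUnderSummands R 𝒳) (henv : HasMonoEnvelopes R 𝒳)
    (N : Type u) [AddCommGroup N] [Module R N] (hNinv : IsEndoInvariant R 𝒳 N)
    (hNclosed : IsStronglyPurelyClosed R 𝒳 N)
    (M : Submodule R N) (hMinv : IsEndoInvariant R 𝒳 M)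
    (hMpure : IsStronglyPureMono R 𝒳 M.subtype)
    (u : N →ₗ[R] M) (hu : IsStronglyPureMono R 𝒳 u) :
    Nonempty (M ≃ₗ[R] N) :=
  stmt9_general R 𝒳 henv hMinv hNinv hNclosed M.subtype hMpure u hu
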